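/- Mutual exclusion for the Qlock protocol (invariant inv1): for every state s reachable from the initial state of the Qlock transition system, and for all process identifiers i and j, if pc(s, i) = cs and pc(s, j) = cs then i = j. -/

import Mathlib

/-! The proof rests on an inductive invariant: a process in the critical section is at the front
of the queue. As a queue has at most one front element, mutual exclusion follows. The invariant
survives `want` because appending does not change the front of a nonempty queue, `try` because its
guard places the entering process at the front, and `exit` because the leaving process was
at the front, so that no other process was critical. -/

/-- Labels of the Qlock protocol: remainder section, waiting section, critical section. -/
inductive QlockLabel : Type
  | rs | ws | cs
deriving DecidableEq

/-- A state of the Qlock protocol: a program counter assigning a label to each process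
identifier, together with a queue of process identifiers. -/
structure QlockState (Pid : Type*) where
  pc : Pid → QlockLabel
  queue : List Pid

/-- The initial Qlock state: every process is in the remainder section and the queue is
empty. -/
def QlockState.init (Pid : Type*) : QlockState Pid :=
  ⟨fun _ => .rs, []⟩

/-- The transitions of the Qlock protocol. -/
inductive QlockTrans {Pid : Type*} [DecidableEq Pid] : QlockState Pid → QlockState Pid → Prop
  | want (s : QlockState Pid) (i : Pid) (h : s.pc i = .rs) :
      QlockTrans s ⟨Function.update s.pc i .ws, s.queue ++ [i]⟩
  | tryEnter (s : QlockState Pid) (i : Pid) (h : s.pc i = .ws) (hq : s.queue.head? = some i) :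
      QlockTrans s ⟨Function.update s.pc i .cs, s.queue⟩
  | exit (s : QlockState Pid) (i : Pid) (h : s.pc i = .cs) :
      QlockTrans s ⟨Function.update s.pc i .rs, s.queue.tail⟩

/-- A process in the critical section of a reachable state is at the front of the queue. -/
theorem qlock_head_of_cs {Pid : Type*} [DecidableEq Pid] (s : QlockState Pid)
    (hs : Relation.ReflTransGen QlockTrans (QlockState.init Pid) s) :
    ∀ k : Pid, s.pc k = .cs → s.queue.head? = some k := by
  induction hs with
  | refl =>
    intro k hk
    simp [QlockState.init] at hk
  | tail _ ht ih =>
    cases ht with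
    | want i h =>
      intro k hk
      by_cases hki : k = i
      · subst hki
        simp at hk
      · have hk' := ih k (by simpa [hki] using hk)
        simp [List.head?_append, hk']
    | tryEnter i h hq =>
      intro k hk
      by_cases hki : k = i
      · subst hki
        exact hq
      · exact ih k (by simpa [hki] using hk)
    | exit i h =>
      intro k hk
      by_cases hki : k = i
      · subst hki
        simp at hk
      · have hk' := ih k (by simpa [hki] using hk)
        -- Both `i` and `k` would be the front of the old queue.
        exact absurd (Option.some.inj (hk'.symm.trans (ih i h))) hki

/-- Mutual exclusion for the Qlock protocol (invariant `inv1`): in every reachable state,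
at most one process is in the critical section. -/
theorem qlock_mutual_exclusion {Pid : Type*} [DecidableEq Pid] (s : QlockState Pid)
    (hs : Relation.ReflTransGen QlockTrans (QlockState.init Pid) s)
    (i j : Pid) (hi : s.pc i = .cs) (hj : s.pc j = .cs) : i = j := by
  exact Option.some.inj
    ((qlock_head_of_cs s hs i hi).symm.trans (qlock_head_of_cs s hs j hj))
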